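/- arXiv:2202.07737 — 4 statements merged into one kernel-verified Lean document; each statement's English description precedes it below -/
import Mathlib

section
/- Let c be a square-integrable real-valued random variable with E[c] = 1 and X a square-integrable random vector in ℝ^p, with c and X independent, and suppose ⟨X, 1⟩ = s almost surely for some constant s ∈ ℝ. Write μ = E[X] and Σ_cx = Cov(cX). Then Σ_cx·1 = Var(c)·(μᵀ1)·μ, i.e., applying the covariance matrix of cX to the all-ones vector yields the mean vector μ scaled by Var(c) times the sum of the entries of μ. -/
open MeasureTheory ProbabilityTheory Matrix

/-- If `E[c] = 1`, `c` is independent of the square-integrable random vector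
`X`, and `⟨X, 1⟩ = s` almost surely, then writing `μ = E[X]` and `Σ_cx = Cov(cX)`, we have
`Σ_cx · 1 = Var(c) · (μᵀ1) · μ`. -/
theorem cov_smul_mulVec_ones_eq_var_smul_mean
    {Ω : Type*} [MeasureSpace Ω] [IsProbabilityMeasure (ℙ : Measure Ω)]
    {p : ℕ} (c : Ω → ℝ) (X : Ω → Fin p → ℝ)
    (hc : MemLp c 2 ℙ) (hX : ∀ i, MemLp (fun ω => X ω i) 2 ℙ)
    (hindep : IndepFun c X ℙ) (hEc : ∫ ω, c ω = 1)
    (s : ℝ) (hsum : ∀ᵐ ω ∂ℙ, ∑ i, X ω i = s) :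
    (Matrix.of fun i j =>
        ∫ ω, (c ω * X ω i - ∫ ω', c ω' * X ω' i) * (c ω * X ω j - ∫ ω', c ω' * X ω' j))
        *ᵥ (fun _ => (1 : ℝ))
      = (variance c ℙ * ∑ i, ∫ ω, X ω i) • (fun i => ∫ ω, X ω i) := by
  have hXi : ∀ i, Integrable (fun ω => X ω i) (ℙ : Measure Ω) :=
    fun i => (hX i).integrable (by norm_num)
  have hci : Integrable c (ℙ : Measure Ω) := hc.integrable (by norm_num)
  have hc2 : Integrable (fun ω => c ω ^ 2) (ℙ : Measure Ω) := hc.integrable_sq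
  have hXX : ∀ i j, Integrable (fun ω => X ω i * X ω j) (ℙ : Measure Ω) :=
    fun i j => (hX i).integrable_mul (hX j)
  have ind1 : ∀ i, IndepFun c (fun ω => X ω i) (ℙ : Measure Ω) := fun i =>
    hindep.comp (φ := fun x : ℝ => x) (ψ := fun x : Fin p → ℝ => x i)
      measurable_id (measurable_pi_apply i)
  have ind2 : ∀ i j, IndepFun (fun ω => c ω ^ 2) (fun ω => X ω i * X ω j) (ℙ : Measure Ω) :=
    fun i j => hindep.comp (φ := fun x : ℝ => x ^ 2) (ψ := fun x : Fin p → ℝ => x i * x j)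
      (by fun_prop) (by fun_prop)
  have hcX : ∀ i, Integrable (fun ω => c ω * X ω i) (ℙ : Measure Ω) :=
    fun i => (ind1 i).integrable_mul hci (hXi i)
  have hccXX : ∀ i j, Integrable (fun ω => c ω ^ 2 * (X ω i * X ω j)) (ℙ : Measure Ω) :=
    fun i j => (ind2 i j).integrable_mul hc2 (hXX i j)
  have e1 : ∀ i, ∫ ω, c ω * X ω i = ∫ ω, X ω i := fun i => by
    rw [(ind1 i).integral_fun_mul_eq_mul_integral hci.1 (hXi i).1, hEc, one_mul]
  have e2 : ∀ i j, ∫ ω, c ω ^ 2 * (X ω i * X ω j)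
      = (∫ ω, c ω ^ 2) * ∫ ω, X ω i * X ω j := fun i j =>
    (ind2 i j).integral_fun_mul_eq_mul_integral hc2.1 (hXX i j).1
  have hs : ∑ i, ∫ ω, X ω i = s := by
    rw [← integral_finsetSum _ (fun i _ => hXi i), integral_congr_ae hsum]
    simp
  have hs2 : ∀ i, ∑ j, ∫ ω, X ω i * X ω j = (∫ ω, X ω i) * s := fun i => by
    rw [← integral_finsetSum _ (fun j _ => hXX i j), ← integral_mul_const]
    apply integral_congr_ae
    filter_upwards [hsum] with ω h
    rw [← Finset.mul_sum, h]
  have key : ∀ i j, ∫ ω, (c ω * X ω i - ∫ ω', X ω' i) * (c ω * X ω j - ∫ ω', X ω' j)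
      = (∫ ω, c ω ^ 2) * (∫ ω, X ω i * X ω j) - (∫ ω, X ω i) * ∫ ω, X ω j := fun i j => by
    generalize ha : ∫ ω, X ω i = a
    generalize hb : ∫ ω, X ω j = b
    have h0 : ∀ ω, (c ω * X ω i - a) * (c ω * X ω j - b)
        = ((c ω ^ 2 * (X ω i * X ω j) - b * (c ω * X ω i)) - a * (c ω * X ω j)) + a * b := by
      intro ω; ring
    simp_rw [h0]
    have i1 : Integrable (fun ω => c ω ^ 2 * (X ω i * X ω j) - b * (c ω * X ω i))
        (ℙ : Measure Ω) := (hccXX i j).sub ((hcX i).const_mul b)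
    have i2 : Integrable (fun ω => c ω ^ 2 * (X ω i * X ω j) - b * (c ω * X ω i)
        - a * (c ω * X ω j)) (ℙ : Measure Ω) := i1.sub ((hcX j).const_mul a)
    rw [integral_add i2 (integrable_const _), integral_sub i1 ((hcX j).const_mul a),
      integral_sub (hccXX i j) ((hcX i).const_mul b), integral_const_mul, integral_const_mul,
      e1, e1, e2, ha, hb]
    simp
    ring
  have hv : variance c ℙ = (∫ ω, c ω ^ 2) - 1 := by
    rw [variance_eq_sub hc, hEc]
    simp
  ext i
  simp only [Matrix.mulVec, dotProduct, Matrix.of_apply, mul_one, Pi.smul_apply, smul_eq_mul]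
  simp_rw [e1, key]
  rw [Finset.sum_sub_distrib, ← Finset.mul_sum, ← Finset.mul_sum, hs2, hs, hv]
  ring
end

section
/- Let x : Ω → ℝ^p and ε : Ω → ℝ^m be square-integrable random vectors on a probability space, with E[x] = μ, Cov(x) = Σ, E[ε] = 0, Cov(ε) = σ²I with σ > 0, and E[(x − μ)εᵀ] = 0 (x and ε uncorrelated). Let A ∈ ℝ^{m×p} and y = Ax + ε. Then the matrix AΣAᵀ + σ²I is invertible, and the affine estimator x̂* = μ + ΣAᵀ(AΣAᵀ + σ²I)⁻¹(y − Aμ) minimizes the mean squared error among all affine estimators: for every matrix W ∈ ℝ^{p×m} and vector b ∈ ℝ^p, E‖x̂* − x‖² ≤ E‖b + Wy − x‖². -/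
open MeasureTheory ProbabilityTheory Matrix


lemma aux_im {Ω : Type*} [MeasureSpace Ω] {f g : Ω → ℝ} (hf : MemLp f 2 (ℙ : Measure Ω))
    (hg : MemLp g 2 (ℙ : Measure Ω)) : Integrable (fun ω => f ω * g ω) (ℙ : Measure Ω) :=
  hf.integrable_mul hg

lemma aux_memLp_lin {Ω : Type*} [MeasureSpace Ω] {n : ℕ} (f : Ω → Fin n → ℝ)
    (hf : ∀ i, MemLp (fun ω => f ω i) 2 (ℙ : Measure Ω)) (a : Fin n → ℝ) :
    MemLp (fun ω => ∑ j, a j * f ω j) 2 (ℙ : Measure Ω) :=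
  memLp_finsetSum _ fun j _ => (hf j).const_mul (a j)

lemma aux_int_lin {Ω : Type*} [MeasureSpace Ω] {n : ℕ} (f : Ω → Fin n → ℝ) (g : Ω → ℝ)
    (hf : ∀ i, MemLp (fun ω => f ω i) 2 (ℙ : Measure Ω)) (hg : MemLp g 2 (ℙ : Measure Ω))
    (a : Fin n → ℝ) :
    ∫ ω, (∑ j, a j * f ω j) * g ω = ∑ j, a j * ∫ ω, f ω j * g ω := by
  simp_rw [Finset.sum_mul, mul_assoc]
  rw [integral_finsetSum]
  · simp_rw [integral_const_mul]
  · intro j _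
    exact ((hf j).integrable_mul hg).const_mul (a j)

/-- Under the linear model `y = Ax + ε` with `E[x] = μ`, `Cov(x) = S`,
`E[ε] = 0`, `Cov(ε) = σ²I` (`σ > 0`), and `x`, `ε` uncorrelated, the matrix `ASAᵀ + σ²I`
is invertible and the affine estimator `x̂* = μ + SAᵀ(ASAᵀ + σ²I)⁻¹(y − Aμ)` minimizes the
mean squared error among all affine estimators `b + Wy`. -/
theorem cwf_is_lmmse
    {Ω : Type*} [MeasureSpace Ω] [IsProbabilityMeasure (ℙ : Measure Ω)]
    {p m : ℕ} (x : Ω → Fin p → ℝ) (ε : Ω → Fin m → ℝ)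
    (μ : Fin p → ℝ) (S : Matrix (Fin p) (Fin p) ℝ) (σ : ℝ) (hσ : 0 < σ)
    (A : Matrix (Fin m) (Fin p) ℝ)
    (hx2 : ∀ i, MemLp (fun ω => x ω i) 2 ℙ)
    (hε2 : ∀ i, MemLp (fun ω => ε ω i) 2 ℙ)
    (hμ : ∀ i, ∫ ω, x ω i = μ i)
    (hS : ∀ i j, ∫ ω, (x ω i - μ i) * (x ω j - μ j) = S i j)
    (hεmean : ∀ i, ∫ ω, ε ω i = 0)
    (hεcov : ∀ i j, ∫ ω, ε ω i * ε ω j = (σ ^ 2 • (1 : Matrix (Fin m) (Fin m) ℝ)) i j)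
    (hcross : ∀ i j, ∫ ω, (x ω i - μ i) * ε ω j = 0)
    (y : Ω → Fin m → ℝ) (hy : ∀ ω, y ω = A *ᵥ x ω + ε ω) :
    IsUnit (A * S * Aᵀ + σ ^ 2 • (1 : Matrix (Fin m) (Fin m) ℝ)) ∧
    ∀ (W : Matrix (Fin p) (Fin m) ℝ) (b : Fin p → ℝ),
      (∫ ω, ∑ i,
          ((μ + (S * Aᵀ) *ᵥ
              ((A * S * Aᵀ + σ ^ 2 • (1 : Matrix (Fin m) (Fin m) ℝ))⁻¹ *ᵥ
                (y ω - A *ᵥ μ))) i - x ω i) ^ 2)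
        ≤ ∫ ω, ∑ i, ((b + W *ᵥ y ω) i - x ω i) ^ 2 := by
  set u : Ω → Fin p → ℝ := fun ω i => x ω i - μ i with hu
  have hu2 : ∀ i, MemLp (fun ω => u ω i) 2 (ℙ : Measure Ω) := fun i =>
    (hx2 i).sub (memLp_const (μ i))
  have hu0 : ∀ i, ∫ ω, u ω i = 0 := by
    intro i
    simp only [hu]
    rw [integral_sub ((hx2 i).integrable (by norm_num)) (integrable_const _), hμ]
    simp
  have hSsymm : Sᵀ = S := by
    ext i j
    rw [transpose_apply, ← hS, ← hS]
    simp_rw [mul_comm]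
  have hSpsd : S.PosSemidef := by
    refine PosSemidef.of_dotProduct_mulVec_nonneg ?_ ?_
    · rw [IsHermitian, conjTranspose_eq_transpose_of_trivial, hSsymm]
    · intro v
      have h1 : ∫ ω, (∑ j, v j * u ω j) * (∑ j, v j * u ω j) = star v ⬝ᵥ S *ᵥ v := by
        rw [aux_int_lin u _ hu2 (aux_memLp_lin u hu2 v)]
        simp only [dotProduct, mulVec, star_trivial]
        refine Finset.sum_congr rfl fun j _ => ?_
        congr 1
        simp_rw [mul_comm (u _ j)]
        rw [aux_int_lin u _ hu2 (hu2 j)]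
        refine Finset.sum_congr rfl fun k _ => ?_
        rw [← hS j k, mul_comm]
        simp only [hu, mul_comm]
      rw [← h1]
      exact integral_nonneg fun ω => mul_self_nonneg _
  set M := A * S * Aᵀ + σ ^ 2 • (1 : Matrix (Fin m) (Fin m) ℝ) with hM
  have hMpd : M.PosDef := by
    refine PosDef.posSemidef_add ?_ (PosDef.one.smul (by positivity))
    have := hSpsd.mul_mul_conjTranspose_same A
    rwa [conjTranspose_eq_transpose_of_trivial] at this
  have hMu : IsUnit M := hMpd.isUnit
  refine ⟨hMu, fun W b => ?_⟩
  have hMdet : IsUnit M.det := (isUnit_iff_isUnit_det M).1 hMu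
  set z : Ω → Fin m → ℝ := fun ω => y ω - A *ᵥ μ with hz
  have hzv : ∀ ω j, z ω j = (∑ k, A j k * u ω k) + ε ω j := by
    intro ω j
    simp only [hz, hy, hu, Pi.sub_apply, Pi.add_apply, mulVec, dotProduct, mul_sub,
      Finset.sum_sub_distrib]
    ring
  have hz2 : ∀ j, MemLp (fun ω => z ω j) 2 (ℙ : Measure Ω) := by
    intro j
    simp_rw [hzv]
    exact (aux_memLp_lin u hu2 (A j)).add (hε2 j)
  have hzg : ∀ (g : Ω → ℝ), MemLp g 2 (ℙ : Measure Ω) → ∀ j,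
      ∫ ω, z ω j * g ω = (∑ k, A j k * ∫ ω, u ω k * g ω) + ∫ ω, ε ω j * g ω := by
    intro g hg j
    simp_rw [hzv, add_mul]
    rw [integral_add (aux_im (aux_memLp_lin u hu2 (fun k => A j k)) hg)
      (aux_im (hε2 j) hg), aux_int_lin u g hu2 hg (fun k => A j k)]
  have hz0 : ∀ j, ∫ ω, z ω j = 0 := by
    intro j
    have := hzg (fun _ => 1) (memLp_const 1) j
    simpa [hu0, hεmean] using this
  have huz : ∀ i j, ∫ ω, z ω j * u ω i = (S * Aᵀ) i j := by
    intro i j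
    rw [hzg _ (hu2 i)]
    have h1 : ∫ ω, ε ω j * u ω i = 0 := by
      rw [← hcross i j]; simp only [hu, mul_comm]
    rw [h1, add_zero, mul_apply]
    refine Finset.sum_congr rfl fun k _ => ?_
    rw [transpose_apply, mul_comm, ← hS i k]
    simp only [hu, mul_comm]
  have hzz : ∀ j k, ∫ ω, z ω j * z ω k = M j k := by
    intro j k
    rw [hzg _ (hz2 k)]
    have h1 : ∫ ω, ε ω j * z ω k = (σ ^ 2 • (1 : Matrix (Fin m) (Fin m) ℝ)) j k := by
      rw [← hεcov]
      simp_rw [mul_comm (ε _ j)]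
      rw [hzg _ (hε2 j)]
      simp only [hu, hcross, mul_zero, Finset.sum_const_zero, zero_add]
    rw [h1, hM, Matrix.add_apply, Matrix.mul_assoc, mul_apply]
    congr 1
    refine Finset.sum_congr rfl fun l _ => ?_
    rw [← huz l k]
    simp only [mul_comm]
  set K := S * Aᵀ * M⁻¹ with hK
  have hKM : K * M = S * Aᵀ := by
    rw [hK, Matrix.mul_assoc, nonsing_inv_mul _ hMdet, Matrix.mul_one]
  set e : Ω → Fin p → ℝ := fun ω i => (∑ j, K i j * z ω j) - u ω i with he
  have he2 : ∀ i, MemLp (fun ω => e ω i) 2 (ℙ : Measure Ω) := fun i =>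
    (aux_memLp_lin z hz2 (K i)).sub (hu2 i)
  have heg : ∀ (g : Ω → ℝ), MemLp g 2 (ℙ : Measure Ω) → ∀ i,
      ∫ ω, e ω i * g ω = (∑ j, K i j * ∫ ω, z ω j * g ω) - ∫ ω, u ω i * g ω := by
    intro g hg i
    simp_rw [he, sub_mul]
    rw [integral_sub (aux_im (aux_memLp_lin z hz2 (fun k => K i k)) hg)
      (aux_im (hu2 i) hg), aux_int_lin z g hz2 hg (fun k => K i k)]
  have he0 : ∀ i, ∫ ω, e ω i = 0 := by
    intro i
    have := heg (fun _ => 1) (memLp_const 1) i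
    simpa [hu0, hz0] using this
  have hez : ∀ i k, ∫ ω, z ω k * e ω i = 0 := by
    intro i k
    simp_rw [mul_comm (z _ k)]
    rw [heg _ (hz2 k)]
    simp_rw [hzz, mul_comm (u _ i)]
    rw [huz, ← hKM, mul_apply, sub_self]
  set d : Ω → Fin p → ℝ := fun ω i =>
    (∑ j, (W - K) i j * z ω j) + (b + W *ᵥ (A *ᵥ μ) - μ) i with hd
  have hd2 : ∀ i, MemLp (fun ω => d ω i) 2 (ℙ : Measure Ω) := fun i =>
    (aux_memLp_lin z hz2 ((W - K) i)).add (memLp_const _)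
  have hde : ∀ i, ∫ ω, d ω i * e ω i = 0 := by
    intro i
    simp_rw [hd, add_mul]
    rw [integral_add (aux_im (aux_memLp_lin z hz2 (fun k => (W - K) i k)) (he2 i))
      (((he2 i).integrable (by norm_num)).const_mul _), aux_int_lin z _ hz2 (he2 i) (fun k => (W - K) i k),
      integral_const_mul, he0]
    simp [hez]
  have hL : ∀ ω i, (μ + (S * Aᵀ) *ᵥ (M⁻¹ *ᵥ z ω)) i - x ω i = e ω i := by
    intro ω i
    rw [mulVec_mulVec, ← hK]
    simp only [he, hu, Pi.add_apply, mulVec, dotProduct]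
    ring
  have hR : ∀ ω i, (b + W *ᵥ y ω) i - x ω i = e ω i + d ω i := by
    intro ω i
    have h1 : y ω = z ω + A *ᵥ μ := by simp [hz]
    rw [h1, mulVec_add]
    simp only [he, hd, hu, Pi.add_apply, Pi.sub_apply, Matrix.sub_apply, sub_mul,
      Finset.sum_sub_distrib]
    have h2 : (W *ᵥ z ω) i = ∑ j, W i j * z ω j := rfl
    rw [h2]
    ring
  simp_rw [hR]
  have hL' : (fun ω => ∑ i, ((μ + (S * Aᵀ) *ᵥ (M⁻¹ *ᵥ (y ω - A *ᵥ μ))) i - x ω i) ^ 2)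
      = fun ω => ∑ i, (e ω i) ^ 2 := by
    funext ω
    exact Finset.sum_congr rfl fun i _ => by rw [← hL ω i]
  refine (congrArg (fun f : Ω → ℝ => ∫ ω, f ω) hL').le.trans ?_
  have hed : ∀ i, Integrable (fun ω => (e ω i + d ω i) ^ 2) (ℙ : Measure Ω) := fun i =>
    ((he2 i).add (hd2 i)).integrable_sq
  rw [integral_finsetSum _ fun i _ => (he2 i).integrable_sq,
    integral_finsetSum _ fun i _ => hed i]
  refine Finset.sum_le_sum fun i _ => ?_
  have h3 : ∀ ω, (e ω i + d ω i) ^ 2 = (e ω i ^ 2 + d ω i ^ 2) + 2 * (d ω i * e ω i) := by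
    intro ω; ring
  simp_rw [h3]
  have h4 : Integrable (fun ω => e ω i ^ 2 + d ω i ^ 2) (ℙ : Measure Ω) :=
    (he2 i).integrable_sq.add (hd2 i).integrable_sq
  rw [integral_add h4
    ((aux_im (hd2 i) (he2 i)).const_mul 2), integral_const_mul, hde,
    integral_add (he2 i).integrable_sq (hd2 i).integrable_sq]
  have : 0 ≤ ∫ ω, d ω i ^ 2 := integral_nonneg fun ω => sq_nonneg _
  linarith
end

section
/- Let x : Ω → ℝ^p and ε : Ω → ℝ^m be square-integrable random vectors with E[x] = μ, Cov(x) = Σ, E[ε] = 0, Cov(ε) = σ²I with σ > 0, and E[(x − μ)εᵀ] = 0. Let A ∈ ℝ^{m×p}, y = Ax + ε, and fix a ∈ ℝ^p. Then the scalar affine estimator aᵀμ + aᵀΣAᵀ(AΣAᵀ + σ²I)⁻¹(y − Aμ) minimizes the mean squared error for estimating aᵀx among all scalar affine functions of y: for every w ∈ ℝ^m and β ∈ ℝ, E|aᵀμ + aᵀΣAᵀ(AΣAᵀ + σ²I)⁻¹(y − Aμ) − aᵀx|² ≤ E|β + wᵀy − aᵀx|². In particular, applying the linear functional aᵀ to the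 optimal affine estimator of x yields the optimal affine estimator of aᵀx. -/
open MeasureTheory ProbabilityTheory Matrix

theorem aux_quad {Ω : Type*} [MeasureSpace Ω] {ι : Type*} [Fintype ι] (Z : ι → Ω → ℝ)
    (hZ : ∀ i, MemLp (Z i) 2 ℙ) (t : ι → ℝ) :
    ∫ ω, (∑ i, t i * Z i ω) ^ 2 = ∑ i, ∑ j, t i * t j * ∫ ω, Z i ω * Z j ω := by
  have hI : ∀ i j, Integrable (fun ω => Z i ω * Z j ω) ℙ := fun i j =>
    (hZ i).integrable_mul (hZ j)
  have h1 : ∀ ω, (∑ i, t i * Z i ω) ^ 2 = ∑ i, ∑ j, t i * t j * (Z i ω * Z j ω) := by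
    intro ω
    rw [sq, Finset.sum_mul_sum]
    refine Finset.sum_congr rfl fun i _ => Finset.sum_congr rfl fun j _ => by ring
  simp_rw [h1]
  rw [integral_finset_sum _ fun i _ => integrable_finset_sum _ fun j _ => (hI i j).const_mul _]
  refine Finset.sum_congr rfl fun i _ => ?_
  rw [integral_finset_sum _ fun j _ => (hI i j).const_mul _]
  refine Finset.sum_congr rfl fun j _ => ?_
  rw [integral_const_mul]

theorem aux_mse {Ω : Type*} [MeasureSpace Ω] [IsProbabilityMeasure (ℙ : Measure Ω)]
    {p m : ℕ} (x : Ω → Fin p → ℝ) (ε : Ω → Fin m → ℝ)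
    (μ : Fin p → ℝ) (S : Matrix (Fin p) (Fin p) ℝ) (σ : ℝ)
    (hx2 : ∀ i, MemLp (fun ω => x ω i) 2 ℙ)
    (hε2 : ∀ i, MemLp (fun ω => ε ω i) 2 ℙ)
    (hμ : ∀ i, ∫ ω, x ω i = μ i)
    (hS : ∀ i j, ∫ ω, (x ω i - μ i) * (x ω j - μ j) = S i j)
    (hεmean : ∀ i, ∫ ω, ε ω i = 0)
    (hεcov : ∀ i j, ∫ ω, ε ω i * ε ω j = (σ ^ 2 • (1 : Matrix (Fin m) (Fin m) ℝ)) i j)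
    (hcross : ∀ i j, ∫ ω, (x ω i - μ i) * ε ω j = 0) (c : ℝ) (u : Fin p → ℝ) (v : Fin m → ℝ) :
    ∫ ω, (c + u ⬝ᵥ (x ω - μ) + v ⬝ᵥ ε ω) ^ 2 = c ^ 2 + u ⬝ᵥ S *ᵥ u + σ ^ 2 * (v ⬝ᵥ v) := by
  have hm : ∀ i, ∫ ω, (x ω i - μ i) = 0 := by
    intro i
    rw [integral_sub ((hx2 i).integrable (by norm_num)) (integrable_const _), hμ i]
    simp
  have hcross2 : ∀ i j, ∫ ω, ε ω j * (x ω i - μ i) = 0 := by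
    intro i j
    simpa only [mul_comm] using hcross i j
  have h := aux_quad (ι := Unit ⊕ (Fin p ⊕ Fin m))
    (Sum.elim (fun _ _ => (1 : ℝ)) (Sum.elim (fun i ω => x ω i - μ i) (fun i ω => ε ω i)))
    (by
      rintro (_ | i | i)
      · exact memLp_const _
      · exact (hx2 i).sub (memLp_const _)
      · exact hε2 i)
    (Sum.elim (fun _ => c) (Sum.elim u v))
  simp only [Fintype.sum_sum_type, Sum.elim_inl, Sum.elim_inr, one_mul, mul_one, hS, hεcov,
    hcross, hcross2, hm, hεmean, mul_zero, Finset.sum_const_zero, add_zero, zero_add,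
    Finset.univ_unique, Finset.sum_singleton] at h
  have e : ∀ ω, (c + u ⬝ᵥ (x ω - μ) + v ⬝ᵥ ε ω) =
      c + (∑ i, u i * (x ω i - μ i) + ∑ i, v i * ε ω i) := by
    intro ω
    simp [dotProduct, add_assoc]
  simp_rw [e]
  rw [h]
  simp only [integral_const, probReal_univ, smul_eq_mul, mul_one, dotProduct, mulVec,
    Matrix.smul_apply, Matrix.one_apply, mul_ite, mul_zero, Finset.sum_ite_eq, Finset.mem_univ,
    if_true, Finset.mul_sum, ← add_assoc]
  congr 1
  · congr 1
    · ring
    · refine Finset.sum_congr rfl fun i _ => Finset.sum_congr rfl fun j _ => by ring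
  · refine Finset.sum_congr rfl fun i _ => by ring

/-- Under the linear model `y = Ax + ε` as in Statement 5, for a fixed
`a ∈ ℝ^p`, the scalar affine estimator `aᵀμ + aᵀSAᵀ(ASAᵀ + σ²I)⁻¹(y − Aμ)` minimizes the
mean squared error for estimating `aᵀx` among all scalar affine functions `β + wᵀy` of `y`. -/
theorem linear_functional_of_cwf_is_lmmse
    {Ω : Type*} [MeasureSpace Ω] [IsProbabilityMeasure (ℙ : Measure Ω)]
    {p m : ℕ} (x : Ω → Fin p → ℝ) (ε : Ω → Fin m → ℝ)
    (μ : Fin p → ℝ) (S : Matrix (Fin p) (Fin p) ℝ) (σ : ℝ) (hσ : 0 < σ)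
    (A : Matrix (Fin m) (Fin p) ℝ) (a : Fin p → ℝ)
    (hx2 : ∀ i, MemLp (fun ω => x ω i) 2 ℙ)
    (hε2 : ∀ i, MemLp (fun ω => ε ω i) 2 ℙ)
    (hμ : ∀ i, ∫ ω, x ω i = μ i)
    (hS : ∀ i j, ∫ ω, (x ω i - μ i) * (x ω j - μ j) = S i j)
    (hεmean : ∀ i, ∫ ω, ε ω i = 0)
    (hεcov : ∀ i j, ∫ ω, ε ω i * ε ω j = (σ ^ 2 • (1 : Matrix (Fin m) (Fin m) ℝ)) i j)
    (hcross : ∀ i j, ∫ ω, (x ω i - μ i) * ε ω j = 0)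
    (y : Ω → Fin m → ℝ) (hy : ∀ ω, y ω = A *ᵥ x ω + ε ω) :
    ∀ (w : Fin m → ℝ) (β : ℝ),
      (∫ ω, (a ⬝ᵥ μ +
          a ⬝ᵥ ((S * Aᵀ) *ᵥ
              ((A * S * Aᵀ + σ ^ 2 • (1 : Matrix (Fin m) (Fin m) ℝ))⁻¹ *ᵥ
                (y ω - A *ᵥ μ)))
          - a ⬝ᵥ x ω) ^ 2)
        ≤ ∫ ω, (β + w ⬝ᵥ y ω - a ⬝ᵥ x ω) ^ 2 := by
  have key := aux_mse x ε μ S σ hx2 hε2 hμ hS hεmean hεcov hcross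
  have hSs : Sᵀ = S := by
    ext i j
    rw [transpose_apply, ← hS, ← hS]
    simp only [mul_comm]
  have hSp : ∀ u, 0 ≤ u ⬝ᵥ S *ᵥ u := by
    intro u
    have h := key 0 u 0
    simp only [dotProduct_zero, mul_zero, add_zero] at h
    have h0 : (0 : ℝ) ≤ 0 ^ 2 + u ⬝ᵥ S *ᵥ u := by
      rw [← h]
      exact integral_nonneg fun ω => sq_nonneg _
    simpa using h0
  set K := A * S * Aᵀ + σ ^ 2 • (1 : Matrix (Fin m) (Fin m) ℝ) with hK
  have hKs : Kᵀ = K := by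
    simp [hK, transpose_mul, hSs, Matrix.mul_assoc]
  have hKq : ∀ d e : Fin m → ℝ, d ⬝ᵥ K *ᵥ e = (d ᵥ* A) ⬝ᵥ S *ᵥ (e ᵥ* A) + σ ^ 2 * (d ⬝ᵥ e) := by
    intro d e
    rw [hK, add_mulVec, dotProduct_add, smul_mulVec, one_mulVec, dotProduct_smul, smul_eq_mul,
      ← mulVec_mulVec, ← mulVec_mulVec, mulVec_transpose, dotProduct_mulVec d A]
  have hKu : IsUnit K.det := by
    rw [isUnit_iff_ne_zero]
    intro h0
    obtain ⟨v, hv, hv0⟩ := exists_mulVec_eq_zero_iff.mpr h0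
    have h1 := hKq v v
    rw [hv0, dotProduct_zero] at h1
    have h2 := hSp (v ᵥ* A)
    have h3 : 0 < v ⬝ᵥ v := by
      have h4 : v ⬝ᵥ v ≠ 0 := fun h => hv (dotProduct_self_eq_zero.mp h)
      have h5 : 0 ≤ v ⬝ᵥ v := Finset.sum_nonneg fun i _ => mul_self_nonneg _
      exact lt_of_le_of_ne h5 h4.symm
    have h6 : 0 < σ ^ 2 * (v ⬝ᵥ v) := by positivity
    linarith
  have hsym : ∀ u v : Fin p → ℝ, u ⬝ᵥ S *ᵥ v = v ⬝ᵥ S *ᵥ u := by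
    intro u v
    rw [dotProduct_mulVec, ← mulVec_transpose, hSs, dotProduct_comm]
  have red : ∀ (w : Fin m → ℝ) (β : ℝ), ∫ ω, (β + w ⬝ᵥ y ω - a ⬝ᵥ x ω) ^ 2 =
      (β + w ⬝ᵥ A *ᵥ μ - a ⬝ᵥ μ) ^ 2 + (w ᵥ* A - a) ⬝ᵥ S *ᵥ (w ᵥ* A - a)
        + σ ^ 2 * (w ⬝ᵥ w) := by
    intro w β
    rw [← key]
    congr 1
    ext ω
    rw [hy]
    simp only [dotProduct_add, dotProduct_sub, sub_dotProduct, dotProduct_mulVec]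
    ring
  intro w β
  set w0 : Fin m → ℝ := (a ᵥ* (S * Aᵀ)) ᵥ* K⁻¹ with hw0
  have lhs : ∀ ω, a ⬝ᵥ μ + a ⬝ᵥ ((S * Aᵀ) *ᵥ (K⁻¹ *ᵥ (y ω - A *ᵥ μ))) - a ⬝ᵥ x ω =
      (a ⬝ᵥ μ - w0 ⬝ᵥ A *ᵥ μ) + w0 ⬝ᵥ y ω - a ⬝ᵥ x ω := by
    intro ω
    rw [dotProduct_mulVec, dotProduct_mulVec, ← hw0, dotProduct_sub]
    ring
  simp_rw [lhs]
  rw [red, red]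
  have hKw0 : ∀ d, d ⬝ᵥ K *ᵥ w0 = (d ᵥ* A) ⬝ᵥ S *ᵥ a := by
    intro d
    have : K *ᵥ w0 = A *ᵥ (S *ᵥ a) := by
      rw [← hKs, mulVec_transpose, hw0, vecMul_vecMul, nonsing_inv_mul _ hKu, vecMul_one,
        ← vecMul_vecMul, vecMul_transpose, ← mulVec_transpose, hSs]
    rw [this, dotProduct_mulVec]
  obtain ⟨d, rfl⟩ : ∃ d, w = w0 + d := ⟨w - w0, by simp⟩
  have h1 := hKw0 d
  rw [hKq] at h1
  have h2 := hSp (d ᵥ* A)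
  have h3 : 0 ≤ σ ^ 2 * (d ⬝ᵥ d) :=
    mul_nonneg (sq_nonneg _) (Finset.sum_nonneg fun i _ => mul_self_nonneg _)
  have h4 := sq_nonneg (β + (w0 + d) ⬝ᵥ A *ᵥ μ - a ⬝ᵥ μ)
  have h5 : (a ⬝ᵥ μ - w0 ⬝ᵥ A *ᵥ μ + w0 ⬝ᵥ A *ᵥ μ - a ⬝ᵥ μ) ^ 2 = 0 := by ring
  rw [h5]
  refine le_trans ?_ (add_le_add_left (add_le_add_left h4 _) _)
  simp only [add_vecMul, mulVec_add, mulVec_sub, dotProduct_add, add_dotProduct, dotProduct_sub,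
    sub_dotProduct]
  rw [hsym (w0 ᵥ* A) (d ᵥ* A), hsym a (d ᵥ* A), dotProduct_comm w0 d]
  nlinarith
end

section
/- Let A₁, …, Aₙ ∈ ℝ^{m×p}, let B₁, …, Bₙ ∈ ℝ^{m×m} be symmetric matrices, and let σ ≥ 0. A symmetric matrix Σ ∈ ℝ^{p×p} minimizes the objective G(Σ) = Σᵢ₌₁ⁿ ‖Bᵢ − (AᵢΣAᵢᵀ + σ²I)‖_F² over all symmetric p×p matrices if and only if it satisfies the linear system Σᵢ₌₁ⁿ AᵢᵀAᵢ Σ AᵢᵀAᵢ = Σᵢ₌₁ⁿ Aᵢᵀ Bᵢ Aᵢ − σ² Σᵢ₌₁ⁿ AᵢᵀAᵢ. (This is the first-order optimality condition obtained by setting the gradient of the convex quadratic objective to zero.) -/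
open Matrix

theorem aux_inner {a b : ℕ} (X Y : Matrix (Fin a) (Fin b) ℝ) :
    ∑ k, ∑ l, X k l * Y k l = trace (Xᵀ * Y) := by
  simp only [trace, diag, mul_apply, transpose_apply]
  rw [Finset.sum_comm]

theorem aux_adj {m p : ℕ} (A : Matrix (Fin m) (Fin p) ℝ) (R : Matrix (Fin m) (Fin m) ℝ)
    (D : Matrix (Fin p) (Fin p) ℝ) :
    ∑ k, ∑ l, R k l * (A * D * Aᵀ) k l = trace ((Aᵀ * R * A)ᵀ * D) := by
  rw [aux_inner, ← Matrix.mul_assoc, trace_mul_comm]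
  simp only [transpose_mul, transpose_transpose, Matrix.mul_assoc]

theorem aux_expand {n m p : ℕ} (A : Fin n → Matrix (Fin m) (Fin p) ℝ)
    (B : Fin n → Matrix (Fin m) (Fin m) ℝ) (C : Matrix (Fin m) (Fin m) ℝ)
    (S D : Matrix (Fin p) (Fin p) ℝ) :
    ∑ i, ∑ k, ∑ l, ((B i - (A i * (S + D) * (A i)ᵀ + C)) k l) ^ 2
      = ∑ i, ∑ k, ∑ l, ((B i - (A i * S * (A i)ᵀ + C)) k l) ^ 2
        - 2 * trace ((∑ i, (A i)ᵀ * (B i - (A i * S * (A i)ᵀ + C)) * A i)ᵀ * D)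
        + ∑ i, ∑ k, ∑ l, ((A i * D * (A i)ᵀ) k l) ^ 2 := by
  rw [transpose_sum, Finset.sum_mul, trace_sum]
  simp only [← aux_adj, Finset.mul_sum, ← Finset.sum_sub_distrib, ← Finset.sum_add_distrib]
  refine Finset.sum_congr rfl fun i _ => Finset.sum_congr rfl fun k _ =>
    Finset.sum_congr rfl fun l _ => ?_
  simp only [Matrix.mul_add, Matrix.add_mul, Matrix.sub_apply, Matrix.add_apply]
  ring

/-- For symmetric `Bᵢ` and `σ ≥ 0`, a symmetric matrix `S` minimizes
`G(S) = Σᵢ ‖Bᵢ − (AᵢSAᵢᵀ + σ²I)‖_F²` over all symmetric `p×p` matrices iff it satisfies the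
linear system `Σᵢ AᵢᵀAᵢ S AᵢᵀAᵢ = Σᵢ AᵢᵀBᵢAᵢ − σ² Σᵢ AᵢᵀAᵢ`. -/
theorem covariance_least_squares_first_order_condition
    {n m p : ℕ} (A : Fin n → Matrix (Fin m) (Fin p) ℝ)
    (B : Fin n → Matrix (Fin m) (Fin m) ℝ) (hB : ∀ i, (B i)ᵀ = B i)
    (σ : ℝ) (hσ : 0 ≤ σ)
    (S : Matrix (Fin p) (Fin p) ℝ) (hS : Sᵀ = S) :
    (∀ S' : Matrix (Fin p) (Fin p) ℝ, S'ᵀ = S' →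
        ∑ i, ∑ k, ∑ l,
            ((B i - (A i * S * (A i)ᵀ + σ ^ 2 • (1 : Matrix (Fin m) (Fin m) ℝ))) k l) ^ 2
          ≤ ∑ i, ∑ k, ∑ l,
            ((B i - (A i * S' * (A i)ᵀ + σ ^ 2 • (1 : Matrix (Fin m) (Fin m) ℝ))) k l) ^ 2) ↔
      ∑ i, (A i)ᵀ * A i * S * ((A i)ᵀ * A i)
        = ∑ i, (A i)ᵀ * B i * A i - σ ^ 2 • ∑ i, (A i)ᵀ * A i := by
  set C := σ ^ 2 • (1 : Matrix (Fin m) (Fin m) ℝ) with hC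
  set M := ∑ i, (A i)ᵀ * (B i - (A i * S * (A i)ᵀ + C)) * A i with hM
  have hMeq : M = (∑ i, (A i)ᵀ * B i * A i - σ ^ 2 • ∑ i, (A i)ᵀ * A i)
      - ∑ i, (A i)ᵀ * A i * S * ((A i)ᵀ * A i) := by
    rw [hM, Finset.smul_sum, ← Finset.sum_sub_distrib, ← Finset.sum_sub_distrib]
    refine Finset.sum_congr rfl fun i _ => ?_
    simp only [hC, Matrix.mul_sub, Matrix.sub_mul, Matrix.mul_add, Matrix.add_mul,
      Matrix.mul_smul, Matrix.smul_mul, Matrix.mul_one, Matrix.mul_assoc]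
    abel
  have hMT : Mᵀ = M := by
    rw [hM, transpose_sum]
    refine Finset.sum_congr rfl fun i _ => ?_
    simp only [hC, transpose_mul, transpose_sub, transpose_add, transpose_smul, transpose_one,
      transpose_transpose, hB, hS, Matrix.mul_assoc]
  have hiff : (∑ i, (A i)ᵀ * A i * S * ((A i)ᵀ * A i)
        = ∑ i, (A i)ᵀ * B i * A i - σ ^ 2 • ∑ i, (A i)ᵀ * A i) ↔ M = 0 := by
    rw [hMeq, sub_eq_zero, eq_comm]
  rw [hiff]
  constructor
  · intro h
    set c := ∑ k, ∑ l, M k l * M k l with hc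
    set q := ∑ i, ∑ k, ∑ l, ((A i * M * (A i)ᵀ) k l) ^ 2 with hq
    have hq0 : 0 ≤ q := by positivity
    have key : ∀ t : ℝ, 0 ≤ - 2 * (t * c) + t ^ 2 * q := by
      intro t
      have h1 := h (S + t • M) (by rw [transpose_add, transpose_smul, hS, hMT])
      rw [aux_expand, ← hM, Matrix.mul_smul, trace_smul, ← aux_inner, ← hc] at h1
      have h2 : ∑ i, ∑ k, ∑ l, ((A i * (t • M) * (A i)ᵀ) k l) ^ 2 = t ^ 2 * q := by
        simp only [hq, Finset.mul_sum, Matrix.mul_smul, Matrix.smul_mul, Matrix.smul_apply,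
          smul_eq_mul, mul_pow]
      rw [h2, smul_eq_mul] at h1
      linarith
    have hc0 : c = 0 := by
      have h1 := key (c / (q + 1))
      have h2 : - 2 * (c / (q + 1) * c) + (c / (q + 1)) ^ 2 * q
          = - (c ^ 2 * (q + 2)) / (q + 1) ^ 2 := by
        field_simp
        ring
      rw [h2] at h1
      by_contra hne
      have : 0 < (c ^ 2 * (q + 2)) / (q + 1) ^ 2 := by positivity
      rw [neg_div] at h1
      linarith
    ext k l
    have h3 := (Finset.sum_eq_zero_iff_of_nonneg (fun k _ =>
      Finset.sum_nonneg fun l _ => mul_self_nonneg (M k l))).1 hc0 k (Finset.mem_univ k)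
    have h4 := (Finset.sum_eq_zero_iff_of_nonneg
      (fun l _ => mul_self_nonneg (M k l))).1 h3 l (Finset.mem_univ l)
    exact mul_self_eq_zero.1 h4
  · intro h0 S' _
    have h1 := aux_expand A B C S (S' - S)
    rw [← hM, h0, add_sub_cancel] at h1
    rw [h1]
    have : 0 ≤ ∑ i, ∑ k, ∑ l, ((A i * (S' - S) * (A i)ᵀ) k l) ^ 2 := by positivity
    simp only [transpose_zero, Matrix.zero_mul, trace_zero]
    linarith
end
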